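/- Let (L, α) be a multiplicative Hom-Lie algebra over F and (V, ρ, β) an (L, α)-module with β invertible. If f : L → V is a commuting linear map (ρ(α(x))(f(x)) = 0 for all x ∈ L and β∘f = f∘α), then for all x, y, u, v, w ∈ L: ρ([α(v), α(w)])( ρ(α²(u))( f([x,y]) − ρ(α(x))(f(y)) ) ) = 0. -/

import Mathlib

/-!
Replace `ρ` by the straightened action `x · v = β⁻¹ (ρ (α x) v)`. Suppressing twists, brackets act
by commutators and `f` satisfies `x · f y = - y · f x`. Hence the sum
`S x y z = x · y · f z + y · z · f x + z · x · f y` is alternating, and the defect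
`D x y = f [x, y] - x · f y` satisfies `z · D x y = - S x y z`. Letting `[v, w]` act on `D x y`
gives `S [v, w] x y = v · S w x y - w · S v x y`, while the Jacobi identity gives
`a · S b c d = b · S a c d + c · S a d b + d · S a b c`. Substituting `a = [v, w]` in the latter,
everything becomes linear algebra on the elements `v · w · S u x y`, and forces them to be symmetric
in `v` and `w`; that is, `[v, w] · u · D x y = 0`.
-/

section

variable {R L V : Type*} [CommRing R] [AddCommGroup L] [Module R L] [AddCommGroup V] [Module R V]

/-- The action `x ↦ β⁻¹ ∘ ρ (α x)` on a Hom-Lie module whose twist `β` is invertible. Dividing by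
`β` makes the bracket act, up to `α`, by honest commutators. -/
def straightenedAction (ρ : L →ₗ[R] V →ₗ[R] V) (α : L →ₗ[R] L) (β : V ≃ₗ[R] V) :
    L →ₗ[R] V →ₗ[R] V :=
  (ρ ∘ₗ α).compr₂ β.symm.toLinearMap

theorem apply_straightenedAction (ρ : L →ₗ[R] V →ₗ[R] V) (α : L →ₗ[R] L) (β : V ≃ₗ[R] V)
    (x : L) (v : V) : β (straightenedAction ρ α β x v) = ρ (α x) v := by
  simp [straightenedAction]

/-- The Hom-Jacobi identity for a bilinear bracket with twist `α`, as a condition separate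
from skew-symmetry. -/
def HomJacobi (bracket : L →ₗ[R] L →ₗ[R] L) (α : L →ₗ[R] L) : Prop :=
  ∀ x y z, bracket (α x) (bracket y z) + bracket (α y) (bracket z x)
    + bracket (α z) (bracket x y) = 0

/-- The properties of a commuting map `f` with respect to a straightened action `A`: the twist `β`
is injective and intertwines `A` and `f` with `α`, brackets act by twisted commutators, and
`A x (f x) = 0`. -/
structure IsStraightCommutingMap (bracket : L →ₗ[R] L →ₗ[R] L) (α : L →ₗ[R] L)
    (A : L →ₗ[R] V →ₗ[R] V) (β : V →ₗ[R] V) (f : L →ₗ[R] V) : Prop where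
  twist_injective : Function.Injective β
  twist_act : ∀ x v, β (A x v) = A (α x) (β v)
  twist_map : ∀ x, β (f x) = f (α x)
  act_bracket : ∀ x y v, A (bracket x y) v = A (α x) (A (α y) v) - A (α y) (A (α x) v)
  act_self : ∀ x, A x (f x) = 0

theorem isStraightCommutingMap_straightenedAction {bracket : L →ₗ[R] L →ₗ[R] L} {α : L →ₗ[R] L}
    {ρ : L →ₗ[R] V →ₗ[R] V} {β : V ≃ₗ[R] V} {f : L →ₗ[R] V}
    (hmult : ∀ x y, α (bracket x y) = bracket (α x) (α y))
    (hrep1 : ∀ x v, β (ρ x v) = ρ (α x) (β v))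
    (hrep2 : ∀ x y v, ρ (bracket x y) (β v) = ρ (α x) (ρ y v) - ρ (α y) (ρ x v))
    (hcom : ∀ x, ρ (α x) (f x) = 0) (hfα : ∀ x, β (f x) = f (α x)) :
    IsStraightCommutingMap bracket α (straightenedAction ρ α β) β.toLinearMap f := by
  have hA := apply_straightenedAction ρ α β
  have twist_act : ∀ x v,
      β (straightenedAction ρ α β x v) = straightenedAction ρ α β (α x) (β v) := fun x v =>
    β.injective (by rw [hA (α x), hA, hrep1])
  refine ⟨β.injective, twist_act, hfα, fun x y v => ?_, fun x => ?_⟩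
  · obtain ⟨v, rfl⟩ := β.surjective v
    apply β.injective
    rw [hA, hmult, hrep2, map_sub, hA, hA, ← twist_act, ← twist_act, hA, hA]
  · exact β.injective (by rw [hA, hcom, map_zero])

/-- The cyclic sum `x · y · f z + y · z · f x + z · x · f y`. Up to twists and sign it is
the action of `z` on the defect of `f` at `x, y`. -/
def cyclicSum (A : L →ₗ[R] V →ₗ[R] V) (f : L →ₗ[R] V) (x y z : L) : V :=
  A x (A y (f z)) + A y (A z (f x)) + A z (A x (f y))

section CyclicSum

variable {A : L →ₗ[R] V →ₗ[R] V} {f : L →ₗ[R] V}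

theorem act_swap_of_act_self (hself : ∀ x, A x (f x) = 0) (x y : L) :
    A x (f y) = -A y (f x) := by
  have hsum := hself (x + y)
  simp only [map_add, LinearMap.add_apply, hself, zero_add, add_zero] at hsum
  exact eq_neg_of_add_eq_zero_right hsum

theorem cyclicSum_rotate (A : L →ₗ[R] V →ₗ[R] V) (f : L →ₗ[R] V) (x y z : L) :
    cyclicSum A f y z x = cyclicSum A f x y z := by
  simp only [cyclicSum]
  abel

theorem cyclicSum_swap_of_act_self (hself : ∀ x, A x (f x) = 0) (x y z : L) :
    cyclicSum A f y x z = -cyclicSum A f x y z := by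
  have swap := act_swap_of_act_self hself
  simp only [cyclicSum, swap x z, swap z y, swap y x, map_neg]
  abel

theorem cyclicSum_swap_right_of_act_self (hself : ∀ x, A x (f x) = 0) (x y z : L) :
    cyclicSum A f x z y = -cyclicSum A f x y z := by
  rw [← cyclicSum_rotate, cyclicSum_swap_of_act_self hself, cyclicSum_rotate A f x y z]

end CyclicSum

/-- The defect `f [x, y] - β (x · f y)`; for a straightened action the subtracted term is
`ρ (α x) (f y)`. -/
def bracketDefect (bracket : L →ₗ[R] L →ₗ[R] L) (A : L →ₗ[R] V →ₗ[R] V) (β : V →ₗ[R] V)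
    (f : L →ₗ[R] V) (x y : L) : V :=
  f (bracket x y) - β (A x (f y))

namespace IsStraightCommutingMap

variable {bracket : L →ₗ[R] L →ₗ[R] L} {α : L →ₗ[R] L} {A : L →ₗ[R] V →ₗ[R] V} {β : V →ₗ[R] V}
  {f : L →ₗ[R] V}

theorem twist_cyclicSum (h : IsStraightCommutingMap bracket α A β f) (x y z : L) :
    β (cyclicSum A f x y z) = cyclicSum A f (α x) (α y) (α z) := by
  simp only [cyclicSum, map_add, h.twist_act, h.twist_map]

theorem act_bracketDefect (h : IsStraightCommutingMap bracket α A β f) (x y z : L) :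
    A z (bracketDefect bracket A β f x y) = -cyclicSum A f (α x) (α y) z := by
  have swap := act_swap_of_act_self h.act_self
  rw [bracketDefect, cyclicSum, map_sub, swap z (bracket x y), h.act_bracket, swap (α x) z,
    h.twist_act, h.twist_map, map_neg]
  abel

theorem cyclicSum_bracket (h : IsStraightCommutingMap bracket α A β f) (v w x y : L) :
    cyclicSum A f (bracket v w) (α x) (α y) =
      β (A v (cyclicSum A f w x y) - A w (cyclicSum A f v x y)) :=
  calc cyclicSum A f (bracket v w) (α x) (α y)
    _ = -A (bracket v w) (bracketDefect bracket A β f x y) := by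
        rw [h.act_bracketDefect, neg_neg, ← cyclicSum_rotate]
    _ = A (α v) (cyclicSum A f (α x) (α y) (α w)) - A (α w) (cyclicSum A f (α x) (α y) (α v)) := by
        rw [h.act_bracket, h.act_bracketDefect, h.act_bracketDefect, map_neg, map_neg]
        abel
    _ = β (A v (cyclicSum A f w x y) - A w (cyclicSum A f v x y)) := by
        rw [map_sub, h.twist_act, h.twist_act, h.twist_cyclicSum, h.twist_cyclicSum,
          cyclicSum_rotate A f (α w), cyclicSum_rotate A f (α v)]

theorem bracketDefect_bracket (h : IsStraightCommutingMap bracket α A β f) (x y z : L) :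
    bracketDefect bracket A β f (α x) (bracket y z) =
      f (bracket (α x) (bracket y z)) + β (β (cyclicSum A f x y z - A x (A y (f z)))) := by
  have hdefect : A (α x) (f (bracket y z)) =
      β (A x (A y (f z)) - cyclicSum A f x y z) := by
    have hf : f (bracket y z) = bracketDefect bracket A β f y z + β (A y (f z)) := by
      rw [bracketDefect, sub_add_cancel]
    rw [hf, map_add, h.act_bracketDefect, ← h.twist_act, ← h.twist_cyclicSum,
      cyclicSum_rotate, map_sub, neg_add_eq_sub]
  rw [bracketDefect, hdefect, ← neg_sub (A x _), map_neg, map_neg, sub_eq_add_neg]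

theorem bracketDefect_cyclic (h : IsStraightCommutingMap bracket α A β f)
    (hjac : HomJacobi bracket α) (x y z : L) :
    bracketDefect bracket A β f (α x) (bracket y z)
        + bracketDefect bracket A β f (α y) (bracket z x)
        + bracketDefect bracket A β f (α z) (bracket x y) =
      β (β ((2 : R) • cyclicSum A f x y z)) := by
  have hfjac := congrArg f (hjac x y z)
  simp only [map_add, map_zero] at hfjac
  have hcycle : (2 : R) • cyclicSum A f x y z =
      (cyclicSum A f x y z - A x (A y (f z))) + (cyclicSum A f x y z - A y (A z (f x)))
        + (cyclicSum A f x y z - A z (A x (f y))) := by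
    simp only [two_smul, cyclicSum]
    abel
  rw [h.bracketDefect_bracket, h.bracketDefect_bracket, h.bracketDefect_bracket,
    cyclicSum_rotate A f x, ← cyclicSum_rotate A f z, hcycle]
  simp only [map_add]
  linear_combination (norm := module) hfjac

theorem act_bracketDefect_bracket (h : IsStraightCommutingMap bracket α A β f) (a b c d : L) :
    A (α (α a)) (bracketDefect bracket A β f (α b) (bracket c d)) =
      β (β (A c (cyclicSum A f a d b) + A d (cyclicSum A f a b c))) := by
  have swap := cyclicSum_swap_of_act_self h.act_self
  rw [h.act_bracketDefect, ← h.twist_cyclicSum, ← map_neg, ← swap, h.cyclicSum_bracket,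
    ← cyclicSum_rotate A f a d b, swap b c a, cyclicSum_rotate A f a b c, map_neg, sub_neg_eq_add]

theorem act_cyclicSum_exchange (h : IsStraightCommutingMap bracket α A β f)
    (h2 : IsSMulRegular V (2 : R)) (hjac : HomJacobi bracket α) (a b c d : L) :
    A a (cyclicSum A f b c d) =
      A b (cyclicSum A f a c d) + A c (cyclicSum A f a d b) + A d (cyclicSum A f a b c) := by
  apply h2
  apply h.twist_injective
  apply h.twist_injective
  have hact := congrArg (A (α (α a))) (h.bracketDefect_cyclic hjac b c d)
  rw [← h.twist_act, ← h.twist_act, map_smul] at hact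
  simp only [map_add, h.act_bracketDefect_bracket] at hact
  simp only [two_smul, map_add] at hact ⊢
  rw [← hact]
  abel

theorem commutator_act_cyclicSum (h : IsStraightCommutingMap bracket α A β f)
    (h2 : IsSMulRegular V (2 : R)) (hjac : HomJacobi bracket α) (v w x y z : L) :
    A v (A w (cyclicSum A f x y z)) - A w (A v (cyclicSum A f x y z)) =
      A x (A v (cyclicSum A f w y z) - A w (cyclicSum A f v y z))
        + A y (A v (cyclicSum A f w z x) - A w (cyclicSum A f v z x))
        + A z (A v (cyclicSum A f w x y) - A w (cyclicSum A f v x y)) := by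
  apply h.twist_injective
  have hexchange := h.act_cyclicSum_exchange h2 hjac (bracket v w) (α x) (α y) (α z)
  simp only [h.cyclicSum_bracket, h.act_bracket, ← h.twist_cyclicSum, ← h.twist_act] at hexchange
  simpa only [map_sub, map_add] using hexchange

theorem act_act_cyclicSum_exchange (h : IsStraightCommutingMap bracket α A β f)
    (h2 : IsSMulRegular V (2 : R)) (hjac : HomJacobi bracket α) (v w x y z : L) :
    A w (A v (cyclicSum A f x y z)) =
      A x (A v (cyclicSum A f w y z)) + A y (A v (cyclicSum A f w z x))
        + A z (A v (cyclicSum A f w x y)) := by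
  have swap := cyclicSum_swap_of_act_self h.act_self
  have rotate := cyclicSum_rotate A f
  have swap_right := cyclicSum_swap_right_of_act_self h.act_self
  have exchange := h.act_cyclicSum_exchange h2 hjac
  -- Sum the identities for `[v, t] · S`, `t = w, x, y, z`, with alternating signs: `exchange` under
  -- `v` removes the terms `v · t · S`, and under the other four it removes those with `S v _ _`.
  have exchange_v := congrArg (A v) (exchange w x y z)
  have exchange_w := congrArg (A w) (exchange v x y z)
  have exchange_x := congrArg (A x) (exchange v w y z)
  have exchange_y := congrArg (A y) (exchange v w z x)
  have exchange_z := congrArg (A z) (exchange v w x y)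
  have comm_w := h.commutator_act_cyclicSum h2 hjac v w x y z
  have comm_x := h.commutator_act_cyclicSum h2 hjac v x w y z
  have comm_y := h.commutator_act_cyclicSum h2 hjac v y w z x
  have comm_z := h.commutator_act_cyclicSum h2 hjac v z w x y
  simp only [map_sub, map_add, map_neg, rotate x y z, rotate y z x, rotate w x z, rotate w y x,
    rotate w z y, swap_right w z x, swap_right w x y, swap_right w y z, swap w x y, swap w y z,
    swap w z x, swap_right v w x, swap_right v w y, swap_right v w z]
    at exchange_v exchange_w exchange_x exchange_y exchange_z comm_w comm_x comm_y comm_z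
  linear_combination (norm := module)
    comm_w - comm_x - comm_y - comm_z - exchange_v
      - (exchange_w - exchange_x - exchange_y - exchange_z)

theorem act_act_cyclicSum_comm (h : IsStraightCommutingMap bracket α A β f)
    (h2 : IsSMulRegular V (2 : R)) (hjac : HomJacobi bracket α) (v w x y z : L) :
    A v (A w (cyclicSum A f x y z)) = A w (A v (cyclicSum A f x y z)) := by
  apply h2
  have hcomm := h.commutator_act_cyclicSum h2 hjac v w x y z
  simp only [map_sub] at hcomm
  have hvw := h.act_act_cyclicSum_exchange h2 hjac v w x y z
  have hwv := h.act_act_cyclicSum_exchange h2 hjac w v x y z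
  simp only [two_smul]
  linear_combination (norm := module) hcomm - hvw + hwv

end IsStraightCommutingMap

theorem homLie_commuting_map_lemma42_general
    (h2 : IsSMulRegular V (2 : R))
    (bracket : L →ₗ[R] L →ₗ[R] L) (α : L →ₗ[R] L)
    (hjac : ∀ x y z : L,
      bracket (α x) (bracket y z) + bracket (α y) (bracket z x)
        + bracket (α z) (bracket x y) = 0)
    (hmult : ∀ x y : L, α (bracket x y) = bracket (α x) (α y))
    (ρ : L →ₗ[R] V →ₗ[R] V) (β : V ≃ₗ[R] V)
    (hrep1 : ∀ (x : L) (v : V), β (ρ x v) = ρ (α x) (β v))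
    (hrep2 : ∀ (x y : L) (v : V),
      ρ (bracket x y) (β v) = ρ (α x) (ρ y v) - ρ (α y) (ρ x v))
    (f : L →ₗ[R] V)
    (hcom : ∀ x : L, ρ (α x) (f x) = 0)
    (hfα : ∀ x : L, β (f x) = f (α x)) (x y u v w : L) :
    ρ (bracket (α v) (α w)) (ρ (α (α u)) (f (bracket x y) - ρ (α x) (f y))) = 0 := by
  have h := isStraightCommutingMap_straightenedAction hmult hrep1 hrep2 hcom hfα
  have hA := apply_straightenedAction ρ α β
  set A := straightenedAction ρ α β
  have hdefect : f (bracket x y) - ρ (α x) (f y) =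
      bracketDefect bracket A β.toLinearMap f x y := by
    rw [← hA]
    rfl
  have hu : ρ (α (α u)) (f (bracket x y) - ρ (α x) (f y)) =
      -β (cyclicSum A f (α x) (α y) (α u)) := by
    rw [← hA, hdefect, h.act_bracketDefect, map_neg]
  have hvw : A (bracket v w) (β (cyclicSum A f (α x) (α y) (α u))) = 0 := by
    rw [← β.coe_coe, h.twist_cyclicSum, h.act_bracket, h.act_act_cyclicSum_comm h2 hjac, sub_self]
  rw [← hmult, ← hA, hu, map_neg, hvw, neg_zero, map_zero]

end

/-- Lemma 4.2: for a commuting linear map `f` with `β`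
invertible, `[α(v),α(w)]·α²(u)·(f([x,y]) − α(x)·f(y)) = 0`. -/
theorem homLie_commuting_map_lemma42
    {F L V : Type*} [Field F] [AddCommGroup L] [Module F L]
    [AddCommGroup V] [Module F V]
    (hchar : (2 : F) ≠ 0)
    (bracket : L →ₗ[F] L →ₗ[F] L) (α : L →ₗ[F] L)
    (hskew : ∀ x y : L, bracket x y = - bracket y x)
    (hjac : ∀ x y z : L,
      bracket (α x) (bracket y z) + bracket (α y) (bracket z x)
        + bracket (α z) (bracket x y) = 0)
    (hmult : ∀ x y : L, α (bracket x y) = bracket (α x) (α y))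
    (ρ : L →ₗ[F] V →ₗ[F] V) (β : V ≃ₗ[F] V)
    (hrep1 : ∀ (x : L) (v : V), β (ρ x v) = ρ (α x) (β v))
    (hrep2 : ∀ (x y : L) (v : V),
      ρ (bracket x y) (β v) = ρ (α x) (ρ y v) - ρ (α y) (ρ x v))
    (f : L →ₗ[F] V)
    (hcom : ∀ x : L, ρ (α x) (f x) = 0)
    (hfα : ∀ x : L, β (f x) = f (α x)) :
    ∀ x y u v w : L,
      ρ (bracket (α v) (α w))
        (ρ (α (α u)) (f (bracket x y) - ρ (α x) (f y))) = 0 := by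
  exact homLie_commuting_map_lemma42_general (smul_right_injective V hchar) bracket α hjac hmult ρ β
    hrep1 hrep2 f hcom hfα
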